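/- Let D be a dominated dcpo. Then an element A of the order sobrification D̂ is ≺-compact (i.e., A ≺ A in the scpo D̂) if and only if A = ↓x for some x ∈ D; moreover the map x ↦ ↓x is an order isomorphism from D onto the set K(D̂) of ≺-compact elements of D̂ (with the inclusion order). -/

import Mathlib

/-!
The principal ideals `↓x` with `x ∈ A` are cofinal in `∇A`, so `∇A` is irreducible with supremum `A`;
if it is also Scott-closed, then `A' ≺ A` forces `A' ∈ ∇A`, that is, `A' ◁ A`. Conversely, the union
of a closed irreducible family `ℱ` in `D̂` is again closed, being the preimage of `ℱ` under the
Scott-continuous map `x ↦ ↓x`, and irreducible. Hence `A ≤ sup ℱ` gives `A ⊆ ⋃ ℱ`, and every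
`A' ◁ A` lies in `ℱ`. So `≺` and `◁` agree for dominated `D`, and `A ◁ A` says exactly that `A` is
principal.
-/

namespace HoZhao

variable {α : Type*}

/-- A set is Scott-closed if it is a lower set and contains the supremum of each of its
nonempty directed subsets. -/
def ScottClosed [Preorder α] (S : Set α) : Prop :=
  IsLowerSet S ∧ ∀ d : Set α, d ⊆ S → d.Nonempty → DirectedOn (· ≤ ·) d →
    ∀ a : α, IsLUB d a → a ∈ S

/-- A nonempty set is irreducible if whenever it is covered by two Scott-closed sets it is
contained in one of them. -/
def ScottIrred [Preorder α] (A : Set α) : Prop :=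
  A.Nonempty ∧ ∀ B C : Set α, ScottClosed B → ScottClosed C → A ⊆ B ∪ C → A ⊆ B ∨ A ⊆ C

/-- A dcpo: every nonempty directed subset has a supremum. -/
def IsDcpo (α : Type*) [Preorder α] : Prop :=
  ∀ d : Set α, d.Nonempty → DirectedOn (· ≤ ·) d → ∃ a : α, IsLUB d a

/-- The order sobrification: the poset of Scott-closed irreducible subsets, ordered by
inclusion. -/
abbrev OrderSob (α : Type*) [Preorder α] :=
  {A : Set α // ScottClosed A ∧ ScottIrred A}

/-- x' ≺ x : for every closed irreducible set A with x ≤ sup A, one has x' ∈ A. -/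
def Prec [Preorder α] (x' x : α) : Prop :=
  ∀ A : Set α, ScottClosed A → ScottIrred A → ∀ a : α, IsLUB A a → x ≤ a → x' ∈ A

/-- A' ◁ A : A' is contained in ↓x for some x ∈ A. -/
def Tri [Preorder α] (A' A : OrderSob α) : Prop :=
  ∃ x ∈ (A : Set α), (A' : Set α) ⊆ {y : α | y ≤ x}

/-- ∇A = the collection of all A' ◁ A. -/
def Nabla [Preorder α] (A : OrderSob α) : Set (OrderSob α) := {A' | Tri A' A}

/-- A dcpo is dominated if ∇A is Scott-closed in the order sobrification, for every A. -/
def Dominated (α : Type*) [Preorder α] : Prop :=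
  ∀ A : OrderSob α, ScottClosed (Nabla A)

section Preorder

variable [Preorder α] {β : Type*} [Preorder β]

theorem scottClosed_sInter {𝒮 : Set (Set α)} (h𝒮 : ∀ S ∈ 𝒮, ScottClosed S) :
    ScottClosed (⋂₀ 𝒮) :=
  ⟨isLowerSet_sInter fun S hS => (h𝒮 S hS).1, fun d hd hne hdir a ha S hS =>
    (h𝒮 S hS).2 d (hd.trans (Set.sInter_subset_of_mem hS)) hne hdir a ha⟩

theorem scottClosed_Iic (x : α) : ScottClosed (Set.Iic x) :=
  ⟨isLowerSet_Iic x, fun _ hd _ _ _ ha => ha.2 fun _ hy => hd hy⟩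

theorem ScottClosed.preimage {f : α → β} (hf : ScottContinuous f) {S : Set β}
    (hS : ScottClosed S) : ScottClosed (f ⁻¹' S) :=
  ⟨hS.1.preimage hf.monotone, fun d hd hne hdir _ ha =>
    hS.2 (f '' d) (Set.image_subset_iff.2 hd) (hne.image f)
      (hdir.mono_comp fun _ _ hxy => hf.monotone hxy) _ (hf hne hdir ha)⟩

/-- Closure in the Scott topology, as a closure operator on sets: `scottClosure X` is the
intersection of all Scott-closed sets containing `X`. -/
def scottClosure : ClosureOperator (Set α) :=
  ClosureOperator.ofCompletePred ScottClosed fun _ => scottClosed_sInter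

theorem scottClosed_scottClosure (X : Set α) : ScottClosed (scottClosure X) :=
  scottClosure.isClosed_closure X

theorem ScottClosed.scottClosure_subset {X S : Set α} (hS : ScottClosed S) (hXS : X ⊆ S) :
    scottClosure X ⊆ S :=
  ClosureOperator.closure_min hXS hS

theorem lowerClosure_subset_scottClosure (X : Set α) :
    (lowerClosure X : Set α) ⊆ scottClosure X :=
  lowerClosure_min (scottClosure.le_closure X) (scottClosed_scottClosure X).1

theorem scottIrred_Iic (x : α) : ScottIrred (Set.Iic x) :=
  ⟨Set.nonempty_Iic, fun _ _ hB hC hcover =>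
    (hcover Set.self_mem_Iic).imp (hB.1.Iic_subset ·) (hC.1.Iic_subset ·)⟩

theorem ScottIrred.subset_scottClosure {X Y : Set α} (hX : ScottIrred X) (hXY : X ⊆ Y)
    (hYX : Y ⊆ scottClosure X) : ScottIrred Y :=
  ⟨hX.1.mono hXY, fun B C hB hC hcover => (hX.2 B C hB hC (hXY.trans hcover)).imp
    (fun hXB => hYX.trans (hB.scottClosure_subset hXB))
    (fun hXC => hYX.trans (hC.scottClosure_subset hXC))⟩

theorem ScottIrred.image {f : α → β} (hf : ScottContinuous f) {X : Set α}
    (hX : ScottIrred X) : ScottIrred (f '' X) := by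
  refine ⟨hX.1.image f, fun B C hB hC hcover => ?_⟩
  rw [Set.image_subset_iff] at hcover
  simpa only [Set.image_subset_iff] using hX.2 _ _ (hB.preimage hf) (hC.preimage hf) hcover

theorem scottIrred_biUnion_of_directedOn {ι : Type*} {I : Set ι} {f : ι → Set α}
    (hne : I.Nonempty) (hdir : DirectedOn (fun i j => f i ⊆ f j) I)
    (hf : ∀ i ∈ I, ScottIrred (f i)) : ScottIrred (⋃ i ∈ I, f i) := by
  obtain ⟨i₀, hi₀⟩ := hne
  refine ⟨(hf i₀ hi₀).1.mono (Set.subset_biUnion_of_mem hi₀), fun B C hB hC hcover => ?_⟩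
  simp only [Set.iUnion₂_subset_iff] at hcover ⊢
  by_contra! ⟨⟨i, hi, hiB⟩, ⟨j, hj, hjC⟩⟩
  obtain ⟨k, hk, hik, hjk⟩ := hdir i hi j hj
  rcases (hf k hk).2 B C hB hC (hcover k hk) with hkB | hkC
  · exact hiB (hik.trans hkB)
  · exact hjC (hjk.trans hkC)

theorem ScottClosed.setOf_orderSob_subset {B : Set α} (hB : ScottClosed B) :
    ScottClosed {A : OrderSob α | (A : Set α) ⊆ B} := by
  refine ⟨fun A A' hA'A hAB => Set.Subset.trans hA'A hAB, fun 𝒟 h𝒟B hne hdir S hS => ?_⟩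
  have hirr : ScottIrred (⋃ A ∈ 𝒟, (A : Set α)) :=
    scottIrred_biUnion_of_directedOn hne hdir fun A _ => A.2.2
  let U : OrderSob α := ⟨scottClosure (⋃ A ∈ 𝒟, (A : Set α)), scottClosed_scottClosure _,
    hirr.subset_scottClosure (scottClosure.le_closure _) subset_rfl⟩
  have hSU : S ≤ U := hS.2 fun A hA =>
    (Set.subset_biUnion_of_mem hA).trans (scottClosure.le_closure (⋃ A ∈ 𝒟, (A : Set α)))
  exact Set.Subset.trans hSU (hB.scottClosure_subset (Set.iUnion₂_subset h𝒟B))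

theorem ScottIrred.biUnion_orderSob {ℱ : Set (OrderSob α)} (hℱ : ScottIrred ℱ) :
    ScottIrred (⋃ A ∈ ℱ, (A : Set α)) := by
  obtain ⟨A, hA⟩ := hℱ.1
  refine ⟨A.2.2.1.mono (Set.subset_biUnion_of_mem hA), fun B C hB hC hcover => ?_⟩
  simp only [Set.iUnion₂_subset_iff] at hcover ⊢
  exact hℱ.2 _ _ hB.setOf_orderSob_subset hC.setOf_orderSob_subset fun A hA =>
    A.2.2.2 B C hB hC (hcover A hA)

/-- The principal ideal `↓x` as an element of the order sobrification; `principal` is the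
canonical map from `D` to `D̂`. -/
def principal (x : α) : OrderSob α := ⟨Set.Iic x, scottClosed_Iic x, scottIrred_Iic x⟩

theorem principal_le_iff {x : α} {A : OrderSob α} : principal x ≤ A ↔ x ∈ (A : Set α) :=
  ⟨fun h => h Set.self_mem_Iic, fun hx => A.2.1.1.Iic_subset hx⟩

theorem principal_le_principal {x y : α} : principal x ≤ principal y ↔ x ≤ y :=
  principal_le_iff

theorem scottContinuous_principal : ScottContinuous (principal : α → OrderSob α) := by
  refine fun d hne hdir a ha => ⟨?_, fun U hU => ?_⟩
  · rintro _ ⟨x, hx, rfl⟩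
    exact principal_le_principal.2 (ha.1 hx)
  · have hdU : d ⊆ U := fun x hx => principal_le_iff.1 (hU (Set.mem_image_of_mem _ hx))
    exact principal_le_iff.2 (U.2.1.2 d hdU hne hdir a ha)

theorem isLUB_image_principal (A : OrderSob α) : IsLUB (principal '' (A : Set α)) A := by
  refine ⟨?_, fun U hU x hx => principal_le_iff.1 (hU (Set.mem_image_of_mem _ hx))⟩
  rintro _ ⟨x, hx, rfl⟩
  exact principal_le_iff.2 hx

theorem preimage_principal_eq_biUnion {ℱ : Set (OrderSob α)} (hℱ : IsLowerSet ℱ) :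
    principal ⁻¹' ℱ = ⋃ A ∈ ℱ, (A : Set α) := by
  ext x
  simp only [Set.mem_preimage, Set.mem_iUnion₂, exists_prop]
  exact ⟨fun hx => ⟨principal x, hx, Set.self_mem_Iic⟩,
    fun ⟨A, hA, hx⟩ => hℱ (principal_le_iff.2 hx) hA⟩

theorem subset_biUnion_of_isLUB {ℱ : Set (OrderSob α)} (hclosed : ScottClosed ℱ)
    (hirr : ScottIrred ℱ) {S : OrderSob α} (hS : IsLUB ℱ S) :
    (S : Set α) ⊆ ⋃ A ∈ ℱ, (A : Set α) := by
  have hUclosed : ScottClosed (⋃ A ∈ ℱ, (A : Set α)) :=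
    preimage_principal_eq_biUnion hclosed.1 ▸ hclosed.preimage scottContinuous_principal
  let U : OrderSob α := ⟨⋃ A ∈ ℱ, (A : Set α), hUclosed, hirr.biUnion_orderSob⟩
  have hSU : S ≤ U := hS.2 fun A hA => Set.subset_biUnion_of_mem (u := Subtype.val) hA
  exact hSU

theorem nabla_eq_lowerClosure (A : OrderSob α) :
    Nabla A = lowerClosure (principal '' (A : Set α)) := by
  ext A'
  simp only [SetLike.mem_coe, mem_lowerClosure, Set.exists_mem_image]
  rfl

theorem scottIrred_nabla (A : OrderSob α) : ScottIrred (Nabla A) := by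
  rw [nabla_eq_lowerClosure]
  exact (A.2.2.image scottContinuous_principal).subset_scottClosure subset_lowerClosure
    (lowerClosure_subset_scottClosure _)

theorem isLUB_nabla (A : OrderSob α) : IsLUB (Nabla A) A := by
  rw [nabla_eq_lowerClosure, isLUB_congr upperBounds_lowerClosure]
  exact isLUB_image_principal A

theorem Tri.prec {A' A : OrderSob α} (h : Tri A' A) : Prec A' A := by
  intro ℱ hclosed hirr S hS hAS
  obtain ⟨x, hxA, hA'x⟩ := h
  obtain ⟨F, hF, hxF⟩ := Set.mem_iUnion₂.1 (subset_biUnion_of_isLUB hclosed hirr hS (hAS hxA))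
  have hA'F : A' ≤ F := Set.Subset.trans hA'x (principal_le_iff.2 hxF)
  exact hclosed.1 hA'F hF

theorem Dominated.prec_iff_tri (hdom : Dominated α) {A' A : OrderSob α} :
    Prec A' A ↔ Tri A' A :=
  ⟨fun h => h (Nabla A) (hdom A) (scottIrred_nabla A) A (isLUB_nabla A) le_rfl, Tri.prec⟩

theorem tri_self_iff {A : OrderSob α} : Tri A A ↔ ∃ x, A = principal x := by
  constructor
  · rintro ⟨x, hxA, hAx⟩
    exact ⟨x, le_antisymm hAx (principal_le_iff.2 hxA)⟩
  · rintro ⟨x, rfl⟩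
    exact ⟨x, Set.self_mem_Iic, subset_rfl⟩

theorem Dominated.prec_self_iff (hdom : Dominated α) {A : OrderSob α} :
    Prec A A ↔ ∃ x, A = principal x :=
  hdom.prec_iff_tri.trans tri_self_iff

end Preorder

/-- For dominated D, the ≺-compact elements of D̂ are exactly the principal
downsets ↓x, and x ↦ ↓x is an order isomorphism from D onto K(D̂). -/
theorem prec_compact_iff_principal [PartialOrder α] (hD : IsDcpo α) (hdom : Dominated α) :
    (∀ A : OrderSob α, Prec A A ↔ ∃ x : α, (A : Set α) = {y : α | y ≤ x}) ∧
    ∃ e : α ≃o {A : OrderSob α // Prec A A},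
      ∀ x : α, ((e x : OrderSob α) : Set α) = {y : α | y ≤ x} := by
  refine ⟨fun A => hdom.prec_self_iff.trans (exists_congr fun _ => Subtype.ext_iff), ?_⟩
  let toCompact : α ↪o {A : OrderSob α // Prec A A} := OrderEmbedding.ofMapLEIff
    (fun x => ⟨principal x, hdom.prec_self_iff.2 ⟨x, rfl⟩⟩) fun _ _ => principal_le_principal
  have hsurj : Function.Surjective toCompact := by
    rintro ⟨A, hA⟩
    obtain ⟨x, rfl⟩ := hdom.prec_self_iff.1 hA
    exact ⟨x, rfl⟩
  exact ⟨RelIso.ofSurjective toCompact hsurj, fun _ => rfl⟩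

end HoZhao
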